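/- (Theorem 2.1(b)) Let G ⊆ [0,∞) be a Borel set and β ∈ (0, d). If C_{g_{d−β,−}}(G) = 0, then C_{g_{d−β,+}}(G) = 0. -/

import Mathlib

open MeasureTheory Complex
open scoped RealInnerProductSpace ENNReal

noncomputable section

/-- `χ_ξ(x) = exp(−|x| Ψ(sign(x) ξ))`. -/
def chi {d : ℕ} (Ψ : EuclideanSpace ℝ (Fin d) → ℂ) (ξ : EuclideanSpace ℝ (Fin d)) (x : ℝ) : ℂ :=
  Complex.exp (((-|x| : ℝ) : ℂ) * Ψ (Real.sign x • ξ))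

/-- `g_{γ,+}(x) = ∫_{ℝ^d} (Re χ_ξ(x))_+ ‖ξ‖^{−γ} dξ`, with values in `[0,∞]`. -/
def gplus {d : ℕ} (Ψ : EuclideanSpace ℝ (Fin d) → ℂ) (γ : ℝ) (x : ℝ) : ℝ≥0∞ :=
  ∫⁻ ξ : EuclideanSpace ℝ (Fin d),
    ENNReal.ofReal (max ((chi Ψ ξ x).re) 0) * (ENNReal.ofReal ‖ξ‖) ^ (-γ) ∂volume

/-- `g_{γ,−}(x) = ∫_{ℝ^d} (Re χ_ξ(x))_− ‖ξ‖^{−γ} dξ`, with values in `[0,∞]`. -/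
def gminus {d : ℕ} (Ψ : EuclideanSpace ℝ (Fin d) → ℂ) (γ : ℝ) (x : ℝ) : ℝ≥0∞ :=
  ∫⁻ ξ : EuclideanSpace ℝ (Fin d),
    ENNReal.ofReal (max (-(chi Ψ ξ x).re) 0) * (ENNReal.ofReal ‖ξ‖) ^ (-γ) ∂volume

/-- The `f`-energy `E_f(μ) = ∫∫_{G×G} f(t−s) μ(dt)μ(ds)` of a measure on `ℝ`,
for a `[0,∞]`-valued kernel `f`. -/
def energyR (f : ℝ → ℝ≥0∞) (G : Set ℝ) (μ : Measure ℝ) : ℝ≥0∞ :=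
  ∫⁻ t in G, ∫⁻ s in G, f (t - s) ∂μ ∂μ

/-- The `f`-capacity `C_f(G) = [inf_{μ ∈ P(G)} E_f(μ)]⁻¹` (with `1/∞ = 0`), the infimum
being over Borel probability measures supported in `G`. -/
def capacityR (f : ℝ → ℝ≥0∞) (G : Set ℝ) : ℝ≥0∞ :=
  (⨅ (μ : Measure ℝ) (_ : IsProbabilityMeasure μ ∧ μ Gᶜ = 0), energyR f G μ)⁻¹

/-!
The Gram-type kernel `E[cos(⟪ξ, X t⟫ - ⟪ξ, X s⟫)]` is positive semidefinite, and it equals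
`Re χ_ξ(t - s)`. Integrated against `μ ⊗ μ`, the negative part of `Re χ_ξ(t - s)` is therefore
dominated by the positive part, for each frequency `ξ` separately. Integrating over `ξ` against
`‖ξ‖^{-γ} dξ` (Tonelli) compares the two energies of every `μ`, hence the two capacities.
-/

/-- The increments of `X` between times of `T` have Lévy exponent `Ψ`:
`E[exp(i⟨ξ, X_t − X_s⟩)] = exp(−(t−s) Ψ(ξ))` for `s ≤ t` in `T`. Nothing is asked of `X` at times
outside `T`, so a process on `[0, ∞)` is the case `T = Set.Ici 0`. -/
def HasIncrementExponent {d : ℕ} {Ω : Type*} [MeasurableSpace Ω]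
    (X : ℝ → Ω → EuclideanSpace ℝ (Fin d)) (P : Measure Ω)
    (Ψ : EuclideanSpace ℝ (Fin d) → ℂ) (T : Set ℝ) : Prop :=
  ∀ s ∈ T, ∀ t ∈ T, s ≤ t → ∀ ξ : EuclideanSpace ℝ (Fin d),
    ∫ ω, Complex.exp ((⟪ξ, X t ω - X s ω⟫ : ℂ) * Complex.I) ∂P
      = Complex.exp (((-(t - s) : ℝ) : ℂ) * Ψ ξ)

section PositiveSemidefinite

variable {α Ω : Type*} [MeasurableSpace α] [MeasurableSpace Ω]

lemma lintegral_ofReal_max_neg_le {m : Measure α} {f : α → ℝ} (hf : Integrable f m)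
    (hf0 : 0 ≤ ∫ x, f x ∂m) :
    ∫⁻ x, ENNReal.ofReal (max (-f x) 0) ∂m ≤ ∫⁻ x, ENNReal.ofReal (max (f x) 0) ∂m := by
  simp only [ENNReal.ofReal_max, ENNReal.ofReal_zero, zero_le, sup_of_le_left]
  rw [integral_eq_lintegral_pos_part_sub_lintegral_neg_part hf, sub_nonneg] at hf0
  exact (ENNReal.toReal_le_toReal hf.neg.lintegral_lt_top.ne hf.lintegral_lt_top.ne).1 hf0

lemma integral_prod_cos_sub (ν : Measure α) [IsFiniteMeasure ν] {θ : α → ℝ} (hθ : Measurable θ) :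
    ∫ p : α × α, Real.cos (θ p.1 - θ p.2) ∂(ν.prod ν)
      = (∫ t, Real.cos (θ t) ∂ν) ^ 2 + (∫ t, Real.sin (θ t) ∂ν) ^ 2 := by
  have hcos : Integrable (fun t => Real.cos (θ t)) ν :=
    .of_bound (by fun_prop) 1 (.of_forall fun _ => Real.abs_cos_le_one _)
  have hsin : Integrable (fun t => Real.sin (θ t)) ν :=
    .of_bound (by fun_prop) 1 (.of_forall fun _ => Real.abs_sin_le_one _)
  simp only [Real.cos_sub, sq]
  rw [integral_add (hcos.mul_prod hcos) (hsin.mul_prod hsin),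
    integral_prod_mul (fun t => Real.cos (θ t)) fun t => Real.cos (θ t),
    integral_prod_mul (fun t => Real.sin (θ t)) fun t => Real.sin (θ t)]

variable (ν : Measure α) [IsFiniteMeasure ν] (P : Measure Ω) [IsFiniteMeasure P]
  {θ : α → Ω → ℝ} (hθ : Measurable fun p : α × Ω => θ p.1 p.2)

include hθ

lemma integrable_prod_cos_sub :
    Integrable (fun q : (α × α) × Ω => Real.cos (θ q.1.1 q.2 - θ q.1.2 q.2))
      ((ν.prod ν).prod P) := by
  have hfst : Measurable fun q : (α × α) × Ω => θ q.1.1 q.2 :=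
    hθ.comp (f := fun q : (α × α) × Ω => (q.1.1, q.2)) (by fun_prop)
  have hsnd : Measurable fun q : (α × α) × Ω => θ q.1.2 q.2 :=
    hθ.comp (f := fun q : (α × α) × Ω => (q.1.2, q.2)) (by fun_prop)
  exact .of_bound (Real.measurable_cos.comp (hfst.sub hsnd)).aestronglyMeasurable 1
    (.of_forall fun _ => Real.abs_cos_le_one _)

lemma integral_prod_integral_cos_sub_nonneg :
    0 ≤ ∫ p : α × α, ∫ ω, Real.cos (θ p.1 ω - θ p.2 ω) ∂P ∂(ν.prod ν) := by
  rw [integral_integral_swap (integrable_prod_cos_sub ν P hθ)]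
  refine integral_nonneg fun ω => ?_
  have hθω : Measurable fun t => θ t ω := hθ.comp measurable_prodMk_right
  simp only [integral_prod_cos_sub ν hθω]
  positivity

end PositiveSemidefinite

section Energy

variable {f : ℝ → ℝ≥0∞} {G : Set ℝ} {μ : Measure ℝ}

lemma energyR_eq_lintegral_prod [SFinite μ] (hf : Measurable f) (hμ : μ Gᶜ = 0) :
    energyR f G μ = ∫⁻ p : ℝ × ℝ, f (p.1 - p.2) ∂(μ.prod μ) := by
  rw [energyR, Measure.restrict_eq_self_of_ae_mem hμ, lintegral_prod _ (by fun_prop)]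

lemma energyR_mul_const (hf : Measurable f) (c : ℝ≥0∞) [SFinite μ] :
    energyR (fun x => f x * c) G μ = energyR f G μ * c := by
  have hinner : Measurable fun t => ∫⁻ s in G, f (t - s) ∂μ :=
    Measurable.lintegral_prod_right' (f := fun p : ℝ × ℝ => f (p.1 - p.2)) (by fun_prop)
  simp only [energyR]
  rw [← lintegral_mul_const _ hinner]
  exact lintegral_congr fun t => lintegral_mul_const _ (by fun_prop)

lemma energyR_lintegral {E : Type*} [MeasurableSpace E] [SFinite μ] (V : Measure E) [SFinite V]
    {K : ℝ → E → ℝ≥0∞} (hK : Measurable fun p : ℝ × E => K p.1 p.2) :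
    energyR (fun x => ∫⁻ ξ, K x ξ ∂V) G μ = ∫⁻ ξ, energyR (fun x => K x ξ) G μ ∂V := by
  have hdiff : Measurable fun q : (ℝ × ℝ) × E => K (q.1.1 - q.1.2) q.2 :=
    hK.comp (f := fun q : (ℝ × ℝ) × E => (q.1.1 - q.1.2, q.2)) (by fun_prop)
  simp only [energyR]
  rw [lintegral_lintegral hdiff.lintegral_prod_right'.aemeasurable,
    lintegral_lintegral_swap hdiff.aemeasurable]
  exact lintegral_congr fun ξ =>
    lintegral_prod _ (hdiff.comp measurable_prodMk_right).aemeasurable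

lemma energyR_ofReal_neg_le {Ω : Type*} [MeasurableSpace Ω] (P : Measure Ω) [IsFiniteMeasure P]
    [IsFiniteMeasure μ] (hμ : μ Gᶜ = 0) {φ : ℝ → ℝ} (hφ : Measurable φ)
    {θ : ℝ → Ω → ℝ} (hθ : Measurable fun p : ℝ × Ω => θ p.1 p.2)
    (hφθ : ∀ t ∈ G, ∀ s ∈ G, φ (t - s) = ∫ ω, Real.cos (θ t ω - θ s ω) ∂P) :
    energyR (fun x => ENNReal.ofReal (max (-φ x) 0)) G μ
      ≤ energyR (fun x => ENNReal.ofReal (max (φ x) 0)) G μ := by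
  have hG : ∀ᵐ t ∂μ, t ∈ G := hμ
  have hae : (fun p : ℝ × ℝ => ∫ ω, Real.cos (θ p.1 ω - θ p.2 ω) ∂P)
      =ᵐ[μ.prod μ] fun p => φ (p.1 - p.2) := by
    filter_upwards [Measure.quasiMeasurePreserving_fst.ae hG,
      Measure.quasiMeasurePreserving_snd.ae hG] with p ht hs
    exact (hφθ _ ht _ hs).symm
  rw [energyR_eq_lintegral_prod (by fun_prop) hμ, energyR_eq_lintegral_prod (by fun_prop) hμ]
  refine lintegral_ofReal_max_neg_le
    ((integrable_prod_cos_sub μ P hθ).integral_prod_left.congr hae) ?_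
  rw [← integral_congr_ae hae]
  exact integral_prod_integral_cos_sub_nonneg μ P hθ

end Energy

section Chi

variable {d : ℕ} {Ψ : EuclideanSpace ℝ (Fin d) → ℂ}

lemma chi_of_nonneg (ξ : EuclideanSpace ℝ (Fin d)) {x : ℝ} (hx : 0 ≤ x) :
    chi Ψ ξ x = Complex.exp (((-x : ℝ) : ℂ) * Ψ ξ) := by
  rcases hx.eq_or_lt with rfl | hx
  · simp [chi]
  · rw [chi, abs_of_pos hx, Real.sign_of_pos hx, one_smul]

lemma chi_neg (ξ : EuclideanSpace ℝ (Fin d)) (x : ℝ) : chi Ψ ξ (-x) = chi Ψ (-ξ) x := by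
  rw [chi, chi, abs_neg, Real.sign_neg, neg_smul, smul_neg]

lemma measurable_real_sign : Measurable Real.sign :=
  .ite measurableSet_Iio measurable_const (.ite measurableSet_Ioi measurable_const measurable_const)

lemma measurable_chi (hΨ : Measurable Ψ) :
    Measurable fun p : ℝ × EuclideanSpace ℝ (Fin d) => chi Ψ p.2 p.1 := by
  have hsign := measurable_real_sign
  unfold chi
  fun_prop

variable {Ω : Type*} [MeasurableSpace Ω] {P : Measure Ω}
  {X : ℝ → Ω → EuclideanSpace ℝ (Fin d)} {G : Set ℝ}

lemma HasIncrementExponent.chi_sub (hX : HasIncrementExponent X P Ψ G)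
    (ξ : EuclideanSpace ℝ (Fin d)) {s t : ℝ} (ht : t ∈ G) (hs : s ∈ G) :
    chi Ψ ξ (t - s) = ∫ ω, Complex.exp ((⟪ξ, X t ω - X s ω⟫ : ℂ) * Complex.I) ∂P := by
  rcases le_total s t with hst | hts
  · rw [chi_of_nonneg ξ (sub_nonneg.2 hst), hX s hs t ht hst]
  · rw [← neg_sub s t, chi_neg, chi_of_nonneg _ (sub_nonneg.2 hts), ← hX t ht s hs hts]
    simp only [inner_neg_left, ← inner_neg_right, neg_sub]

variable [IsFiniteMeasure P] (hXmeas : Measurable fun p : ℝ × Ω => X p.1 p.2)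
include hXmeas

lemma HasIncrementExponent.re_chi_sub (hX : HasIncrementExponent X P Ψ G)
    (ξ : EuclideanSpace ℝ (Fin d)) {s t : ℝ} (ht : t ∈ G) (hs : s ∈ G) :
    (chi Ψ ξ (t - s)).re = ∫ ω, Real.cos (⟪ξ, X t ω⟫ - ⟪ξ, X s ω⟫) ∂P := by
  have hXt (r : ℝ) : Measurable (X r) := hXmeas.comp measurable_prodMk_left
  have hint : Integrable (fun ω => Complex.exp ((⟪ξ, X t ω - X s ω⟫ : ℂ) * Complex.I)) P :=
    .of_bound (by fun_prop) 1 (.of_forall fun _ => (Complex.norm_exp_ofReal_mul_I _).le)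
  rw [hX.chi_sub ξ ht hs]
  refine (integral_re (𝕜 := ℂ) hint).symm.trans (integral_congr_ae (.of_forall fun ω => ?_))
  simp only [← inner_sub_right]
  exact Complex.exp_ofReal_mul_I_re _

lemma HasIncrementExponent.energyR_gminus_le_energyR_gplus (hX : HasIncrementExponent X P Ψ G)
    (hΨ : Measurable Ψ) (γ : ℝ) {μ : Measure ℝ} [IsFiniteMeasure μ] (hμ : μ Gᶜ = 0) :
    energyR (gminus Ψ γ) G μ ≤ energyR (gplus Ψ γ) G μ := by
  have hχ : Measurable fun p : ℝ × EuclideanSpace ℝ (Fin d) => (chi Ψ p.2 p.1).re :=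
    Complex.measurable_re.comp (measurable_chi hΨ)
  have hχξ (ξ : EuclideanSpace ℝ (Fin d)) : Measurable fun x => (chi Ψ ξ x).re :=
    hχ.comp measurable_prodMk_right
  unfold gminus gplus
  rw [energyR_lintegral _ (by fun_prop), energyR_lintegral _ (by fun_prop)]
  refine lintegral_mono fun ξ => ?_
  rw [energyR_mul_const (by fun_prop), energyR_mul_const (by fun_prop)]
  gcongr
  exact energyR_ofReal_neg_le P hμ (hχξ ξ) (θ := fun t ω => ⟪ξ, X t ω⟫) (by fun_prop)
    fun t ht s hs => hX.re_chi_sub hXmeas ξ ht hs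

theorem stmt6_general (hX : HasIncrementExponent X P Ψ G) (hΨ : Measurable Ψ) (γ : ℝ) :
    capacityR (gplus Ψ γ) G ≤ capacityR (gminus Ψ γ) G := by
  refine ENNReal.inv_le_inv.2 (iInf₂_mono fun μ hμ => ?_)
  have := hμ.1
  exact hX.energyR_gminus_le_energyR_gplus hXmeas hΨ γ hμ.2

end Chi

/-- **Theorem 2.1(b).** Let `X` be a process with Lévy-type exponent `Ψ`
(`E[e^{i⟨ξ, X_t − X_s⟩}] = e^{−(t−s)Ψ(ξ)}` for `0 ≤ s ≤ t`), `G ⊆ [0,∞)` Borel and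
`β ∈ (0,d)`. If `C_{g_{d−β,−}}(G) = 0` then `C_{g_{d−β,+}}(G) = 0`. -/
theorem stmt6 {d : ℕ} (hd : 1 ≤ d) (Ψ : EuclideanSpace ℝ (Fin d) → ℂ) (hΨ : Measurable Ψ)
    {Ω : Type*} [MeasurableSpace Ω] (P : Measure Ω) [IsProbabilityMeasure P]
    (X : ℝ → Ω → EuclideanSpace ℝ (Fin d))
    (hXmeas : Measurable fun p : ℝ × Ω => X p.1 p.2)
    (hX : ∀ s t : ℝ, 0 ≤ s → s ≤ t → ∀ ξ : EuclideanSpace ℝ (Fin d),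
      ∫ ω, Complex.exp ((⟪ξ, X t ω - X s ω⟫ : ℂ) * Complex.I) ∂P
        = Complex.exp (((-(t - s) : ℝ) : ℂ) * Ψ ξ))
    (G : Set ℝ) (hG : MeasurableSet G) (hG0 : G ⊆ Set.Ici 0)
    (β : ℝ) (hβ0 : 0 < β) (hβd : β < d)
    (hcap : capacityR (gminus Ψ ((d : ℝ) - β)) G = 0) :
    capacityR (gplus Ψ ((d : ℝ) - β)) G = 0 :=
  le_antisymm ((stmt6_general hXmeas (fun s hs t _ hst => hX s t (hG0 hs) hst) hΨ _).trans_eq hcap)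
    zero_le
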